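/- Suppose one of the hypotheses (b), (d1b) is satisfied. Then the solution manifold X_f is the union, over all J⊂K with U_J≠∅, of the mutually disjoint nonempty sets X_{fJ}, and X_f possesses a finite atlas of at most 2^𝐤 manifold charts: for each J⊂K with U_J≠∅ there is an open subset N_J of X_f containing X_{fJ} which is an almost graph over X_0 and on which a manifold chart with values in the open subset R^J(N_J) (respectively R^K N_K when J=K) of X_0 is defined; the number of charts equals #{J⊂K : U_J≠∅} ≤ 2^𝐤. -/

import Mathlib

open Set

noncomputable section

/-- The compact interval `[-r,0]`. -/
abbrev Icc0 (r : ℝ) : Set ℝ := Set.Icc (-r) 0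

/-- Extension of a continuous map on `[-r,0]` to `ℝ`, by the value `0` outside. -/
def extFun {r : ℝ} {E : Type*} [TopologicalSpace E] [Zero E] (φ : C(Icc0 r, E)) : ℝ → E :=
  fun t => if h : t ∈ Icc0 r then φ ⟨t, h⟩ else 0

section extlemmas

variable {r : ℝ} {E : Type*} [NormedAddCommGroup E] [NormedSpace ℝ E]

lemma extFun_add (φ ψ : C(Icc0 r, E)) : extFun (φ + ψ) = extFun φ + extFun ψ := by
  funext t; by_cases h : t ∈ Icc0 r <;> simp [extFun, h]

lemma extFun_zero : extFun (0 : C(Icc0 r, E)) = 0 := by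
  funext t; by_cases h : t ∈ Icc0 r <;> simp [extFun, h]

lemma extFun_smul (c : ℝ) (φ : C(Icc0 r, E)) : extFun (c • φ) = c • extFun φ := by
  funext t; by_cases h : t ∈ Icc0 r <;> simp [extFun, h]

end extlemmas

/-- The space `C¹([-r,0],E)`, realized as the closed subspace of pairs `(φ, φ')` in
`C([-r,0],E) × C([-r,0],E)` such that `φ` is differentiable on `[-r,0]` with derivative `φ'`. -/
def C1sub (r : ℝ) (E : Type*) [NormedAddCommGroup E] [NormedSpace ℝ E] :
    Submodule ℝ (C(Icc0 r, E) × C(Icc0 r, E)) where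
  carrier := {p | ∀ t ∈ Icc0 r, HasDerivWithinAt (extFun p.1) (extFun p.2 t) (Icc0 r) t}
  add_mem' := by
    intro p q hp hq t ht
    have h := (hp t ht).add (hq t ht)
    have e1 : extFun (p + q).1 = fun s => extFun p.1 s + extFun q.1 s := by
      simp [Prod.fst_add, extFun_add]; rfl
    have e2 : extFun (p + q).2 t = extFun p.2 t + extFun q.2 t := by
      simp [Prod.snd_add, extFun_add]
    rw [e1, e2]; exact h
  zero_mem' := by
    intro t ht
    have e1 : extFun (0 : C(Icc0 r, E) × C(Icc0 r, E)).1 = fun _ : ℝ => (0 : E) := by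
      simp [extFun_zero]; rfl
    have e2 : extFun (0 : C(Icc0 r, E) × C(Icc0 r, E)).2 t = 0 := by
      simp [extFun_zero]
    rw [e1, e2]; exact hasDerivWithinAt_const _ _ _
  smul_mem' := by
    intro c p hp t ht
    have h := (hp t ht).const_smul c
    have e1 : extFun (c • p).1 = fun s => c • extFun p.1 s := by
      simp [Prod.smul_fst, extFun_smul]; rfl
    have e2 : extFun (c • p).2 t = c • extFun p.2 t := by
      simp [Prod.smul_snd, extFun_smul]
    rw [e1, e2]; exact h

/-- The Banach space `C¹([-r,0],E)`. -/
abbrev C1 (r : ℝ) (E : Type*) [NormedAddCommGroup E] [NormedSpace ℝ E] := ↥(C1sub r E)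

section C1ops

variable {r : ℝ} {E : Type*} [NormedAddCommGroup E] [NormedSpace ℝ E]

/-- Evaluation `φ(t)` of `φ ∈ C¹([-r,0],E)` (extended by `0` outside `[-r,0]`). -/
def evC (φ : C1 r E) (t : ℝ) : E := extFun φ.1.1 t

/-- Evaluation `φ'(t)` of the derivative of `φ ∈ C¹([-r,0],E)`. -/
def dvC (φ : C1 r E) (t : ℝ) : E := extFun φ.1.2 t

end C1ops

/-- The continuous linear map `ℝ → (Fin n → ℝ)` sending `x` to the vector `x·e_ν`. -/
def sCLM (n : ℕ) (ν : Fin n) : ℝ →L[ℝ] (Fin n → ℝ) :=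
  ContinuousLinearMap.pi (fun j => if j = ν then ContinuousLinearMap.id ℝ ℝ else 0)

/-- `ψ · e_ν` for a continuous map `ψ`. -/
def CMsingle {r : ℝ} {n : ℕ} (ν : Fin n) (φ : C(Icc0 r, ℝ)) : C(Icc0 r, Fin n → ℝ) :=
  ⟨fun t => sCLM n ν (φ t), (sCLM n ν).continuous.comp φ.continuous⟩

lemma extFun_CMsingle {r : ℝ} {n : ℕ} (ν : Fin n) (φ : C(Icc0 r, ℝ)) (t : ℝ) :
    extFun (CMsingle ν φ) t = sCLM n ν (extFun φ t) := by
  by_cases h : t ∈ Icc0 r <;> simp [extFun, CMsingle, h]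

/-- `ψ · e_ν ∈ C¹([-r,0],ℝⁿ)` for a scalar function `ψ ∈ C¹([-r,0],ℝ)`. -/
def singleC1 {r : ℝ} {n : ℕ} (ν : Fin n) (φ : C1 r ℝ) : C1 r (Fin n → ℝ) :=
  ⟨(CMsingle ν φ.1.1, CMsingle ν φ.1.2), by
    intro t ht
    have h := ((sCLM n ν).hasFDerivAt).comp_hasDerivWithinAt t (φ.2 t ht)
    have e1 : extFun (CMsingle ν φ.1.1) = (sCLM n ν) ∘ (extFun φ.1.1) := by
      funext s; exact extFun_CMsingle ν φ.1.1 s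
    rw [show (CMsingle ν φ.1.1, CMsingle ν φ.1.2).1 = CMsingle ν φ.1.1 from rfl,
      show (CMsingle ν φ.1.1, CMsingle ν φ.1.2).2 = CMsingle ν φ.1.2 from rfl,
      e1, extFun_CMsingle]
    exact h⟩

/-- The linear map `ℝⁿ → C¹([-r,0],ℝⁿ)`, `x ↦ Σ_ν x_ν ψ_ν · e_ν` (the map `Y·x`). -/
def Ymap {r : ℝ} {n : ℕ} (ψ : Fin n → C1 r ℝ) : (Fin n → ℝ) →ₗ[ℝ] C1 r (Fin n → ℝ) where
  toFun x := ∑ ν, x ν • singleC1 ν (ψ ν)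
  map_add' x y := by simp [add_smul, Finset.sum_add_distrib]
  map_smul' c x := by simp [smul_smul, Finset.smul_sum]

/-- The closed subspace `X₀ = {φ ∈ C¹ : φ'(0) = 0}`. -/
def X0sub (r : ℝ) (n : ℕ) : Submodule ℝ (C1 r (Fin n → ℝ)) where
  carrier := {φ | dvC φ 0 = 0}
  add_mem' := by
    intro φ ψ hφ hψ
    have : dvC (φ + ψ) 0 = dvC φ 0 + dvC ψ 0 := by
      simp [dvC, extFun_add]
    rw [Set.mem_setOf_eq] at *
    rw [this, hφ, hψ, add_zero]
  zero_mem' := by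
    show dvC (0 : C1 r (Fin n → ℝ)) 0 = 0
    simp [dvC, extFun_zero]
  smul_mem' := by
    intro c φ hφ
    have : dvC (c • φ) 0 = c • dvC φ 0 := by simp [dvC, extFun_smul]
    rw [Set.mem_setOf_eq] at *
    rw [this, hφ, smul_zero]

/-- The projection-like map `R φ = φ − Y·φ'(0)`. -/
def RKmap {r : ℝ} {n : ℕ} (ψ : Fin n → C1 r ℝ) (φ : C1 r (Fin n → ℝ)) : C1 r (Fin n → ℝ) :=
  φ - Ymap ψ (dvC φ 0)

section diffeos

variable {E : Type*} [NormedAddCommGroup E] [NormedSpace ℝ E]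
variable {E' : Type*} [NormedAddCommGroup E'] [NormedSpace ℝ E']

/-- `f` defines a `C¹`-diffeomorphism from `s` onto `t`: `f` is continuously differentiable
on `s`, injective on `s`, maps `s` onto `t`, and has a continuously differentiable inverse. -/
def IsC1DiffeoOn (f : E → E') (s : Set E) (t : Set E') : Prop :=
  ContDiffOn ℝ 1 f s ∧ Set.InjOn f s ∧ f '' s = t ∧
    ∃ g : E' → E, ContDiffOn ℝ 1 g t ∧ Set.InvOn g f s t

/-- The tangent cone of `X ⊆ E` at `x`: all velocities `c'(0)` of continuously differentiable
curves in `X` through `x`. -/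
def tangentSet (X : Set E) (x : E) : Set E :=
  {v | ∃ (c : ℝ → E) (ε : ℝ), 0 < ε ∧ ContDiffOn ℝ 1 c (Set.Ioo (-ε) ε) ∧
      (∀ s ∈ Set.Ioo (-ε) ε, c s ∈ X) ∧ c 0 = x ∧ HasDerivWithinAt c v (Set.Ioo (-ε) ε) 0}

/-- `X` is a continuously differentiable submanifold of codimension `m` of `E`. -/
def IsC1SubmanifoldCodim (X : Set E) (m : ℕ) : Prop :=
  ∀ x ∈ X, ∃ (O : Set E) (Φ : E → E) (H Q : Submodule ℝ E),
    IsOpen O ∧ x ∈ O ∧ IsClosed (H : Set E) ∧ IsCompl H Q ∧ Module.finrank ℝ Q = m ∧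
    IsOpen (Φ '' O) ∧ IsC1DiffeoOn Φ O (Φ '' O) ∧ Φ '' (X ∩ O) = (H : Set E) ∩ (Φ '' O)

/-- `X` is a continuously differentiable submanifold of `E`. -/
def IsC1Submanifold (X : Set E) : Prop :=
  ∀ x ∈ X, ∃ (O : Set E) (Φ : E → E) (H : Submodule ℝ E),
    IsOpen O ∧ x ∈ O ∧ IsClosed (H : Set E) ∧
    IsOpen (Φ '' O) ∧ IsC1DiffeoOn Φ O (Φ '' O) ∧ Φ '' (X ∩ O) = (H : Set E) ∩ (Φ '' O)

/-- `A` is an almost graph over `H`. -/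
def IsAlmostGraphOver (A : Set E) (H : Set E) : Prop :=
  ∃ (dm : Set E) (α : E → E), dm ⊆ H ∧ ContDiffOn ℝ 1 α dm ∧
    (∀ ζ ∈ dm ∩ A, α ζ = 0) ∧ (∀ ζ ∈ dm \ A, α ζ ∉ H) ∧
    IsC1DiffeoOn (fun ζ => ζ + α ζ) dm A

end diffeos

/-- The data of the delay differential system
`x'(t) = g(x(t-d_1(Lx_t)),…,x(t-d_kk(Lx_t)))`. -/
structure Setting (r : ℝ) (n kk : ℕ) (F : Type*) [NormedAddCommGroup F] [NormedSpace ℝ F] where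
  /-- The continuous linear map `L : C([-r,0],ℝⁿ) → F`. -/
  L : C(Icc0 r, Fin n → ℝ) →L[ℝ] F
  /-- The open set `W ⊆ F`. -/
  W : Set F
  Wopen : IsOpen W
  /-- The delay functions `d_k : W → [0,r]`. -/
  d : Fin kk → F → ℝ
  d_smooth : ∀ k, ContDiffOn ℝ 1 (d k) W
  d_mem : ∀ k, ∀ w ∈ W, d k w ∈ Set.Icc (0:ℝ) r
  /-- The open set `V ⊆ (ℝⁿ)^kk`. -/
  V : Set (Fin kk → Fin n → ℝ)
  Vopen : IsOpen V
  /-- The right hand side function `g : V → ℝⁿ`. -/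
  g : (Fin kk → Fin n → ℝ) → Fin n → ℝ
  g_smooth : ContDiffOn ℝ 1 g V

namespace Setting

variable {r : ℝ} {n kk : ℕ} {F : Type*} [NormedAddCommGroup F] [NormedSpace ℝ F]
variable (S : Setting r n kk F)

/-- `L` applied to (the `C⁰`-part of) `φ ∈ C¹`. -/
def Lof (φ : C1 r (Fin n → ℝ)) : F := S.L φ.1.1

/-- `φ̂ = (φ(-d_1(Lφ)),…,φ(-d_kk(Lφ)))`. -/
def hat (φ : C1 r (Fin n → ℝ)) : Fin kk → Fin n → ℝ := fun k => evC φ (-(S.d k (S.Lof φ)))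

/-- The domain `U = {φ ∈ C¹ : Lφ ∈ W, φ̂ ∈ V}`. -/
def U : Set (C1 r (Fin n → ℝ)) := {φ | S.Lof φ ∈ S.W ∧ S.hat φ ∈ S.V}

/-- The right hand side `f(φ) = g(φ̂)`. -/
def fmap (φ : C1 r (Fin n → ℝ)) : Fin n → ℝ := S.g (S.hat φ)

/-- The solution manifold `X_f = {φ ∈ U : φ'(0) = f(φ)}`. -/
def Xf : Set (C1 r (Fin n → ℝ)) := {φ | φ ∈ S.U ∧ dvC φ 0 = S.fmap φ}

/-- `W_J = {w ∈ W : d_j(w)=0 for j∈J, d_k(w)>0 for k∉J}`. -/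
def WJ (J : Finset (Fin kk)) : Set F :=
  {w | w ∈ S.W ∧ (∀ j ∈ J, S.d j w = 0) ∧ ∀ k ∉ J, 0 < S.d k w}

/-- `W^J = {w ∈ W : d_k(w)>0 for k∉J}`. -/
def WupJ (J : Finset (Fin kk)) : Set F :=
  {w | w ∈ S.W ∧ ∀ k ∉ J, 0 < S.d k w}

/-- `U_J = U ∩ L⁻¹(W_J)`. -/
def UJ (J : Finset (Fin kk)) : Set (C1 r (Fin n → ℝ)) := {φ | φ ∈ S.U ∧ S.Lof φ ∈ S.WJ J}

/-- `U^J = U ∩ L⁻¹(W^J)`. -/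
def UupJ (J : Finset (Fin kk)) : Set (C1 r (Fin n → ℝ)) := {φ | φ ∈ S.U ∧ S.Lof φ ∈ S.WupJ J}

/-- `X_{fJ} = X_f ∩ U_J`. -/
def XfJ (J : Finset (Fin kk)) : Set (C1 r (Fin n → ℝ)) := S.Xf ∩ S.UJ J

/-- Hypothesis (b): `g` is bounded. -/
def HypB : Prop := ∃ M, ∀ v ∈ S.V, ‖S.g v‖ ≤ M

/-- Hypothesis (d1b): `d₁ = 0` on `W` and `g` is bounded on subsets of `V` with bounded
first component. -/
def HypD1B (hk : 0 < kk) : Prop :=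
  (∀ w ∈ S.W, S.d ⟨0, hk⟩ w = 0) ∧
  ∀ B : Set (Fin n → ℝ), Bornology.IsBounded B →
    Bornology.IsBounded (S.g '' {v | v ∈ S.V ∧ v ⟨0, hk⟩ ∈ B})

/-- The partial derivative `∂_{(k-1)n+ν} g_μ (φ̂)`. -/
def dgCoeff (φ : C1 r (Fin n → ℝ)) (k : Fin kk) (ν : Fin n) (μ : Fin n) : ℝ :=
  fderivWithin ℝ S.g S.V (S.hat φ) (Pi.single k (Pi.single ν 1)) μ

/-- The right hand side of the formula for `Df_μ(φ)χ`. -/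
def dFormula (φ χ : C1 r (Fin n → ℝ)) (μ : Fin n) : ℝ :=
  ∑ k, ∑ ν, S.dgCoeff φ k ν μ *
    (evC χ (-(S.d k (S.Lof φ))) ν -
      dvC φ (-(S.d k (S.Lof φ))) ν * fderivWithin ℝ (S.d k) S.W (S.Lof φ) (S.Lof χ))

/-- The map `R^J(φ) = φ − Y_J(Lφ)·φ'(0)` of Section 4 of the paper. -/
def RJmap (y : Fin n → F → C1 r ℝ) (φ : C1 r (Fin n → ℝ)) : C1 r (Fin n → ℝ) :=
  φ - Ymap (fun ν => y ν (S.Lof φ)) (dvC φ 0)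

end Setting
variable {r : ℝ} {n kk : ℕ} {F : Type*} [NormedAddCommGroup F] [NormedSpace ℝ F]
  [FiniteDimensional ℝ F]

/-!
Right inverses of `φ ↦ φ'(0)` with values in the kernel of `L` and vanishing at `0` and at the
positive delayed times exist for each `Lφ ∈ W^J`. They form convex sets which shrink as
`Σ_{k ∉ J} 1/d_k` grows, so a partition of unity in this one real variable yields a smooth family
`Y`. Shearing along `Y` turns the equation `φ'(0) = f(φ)` on `L⁻¹(W^J)` into a fixed point equation
`x = g (v + c x)` for `x = φ'(0)`, whose parameter `(v, c)` is constant along the lines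
`φ + Y(Lφ)x`. Only the delays `d_j` with `j ∈ J` contribute to `c`, and these vanish on `W_J`, so
that `c = 0` there. Hence near `X_{fJ}` the fixed point equation is contractive. Its unique
solution depends smoothly on `(v, c)` and presents `X_f` near `X_{fJ}` as a graph over an open
subset of `X₀`, along the lines `φ + Y(Lφ)x`.
-/

open Metric Filter Topology
open scoped NNReal ContDiff

section FixedPoint

variable {A B : Type*} [NormedAddCommGroup A] [NormedSpace ℝ A] [NormedAddCommGroup B]
  [NormedSpace ℝ B] {V : Set A} {g : A → B} {z : A × (B →L[ℝ] A)} {x y : B}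

/-- The pairs `((v, c), x)` for which `y ↦ g (v + c y)` is a contraction on a region
`{y | ‖c y‖ < δ}` containing `x`. The Lipschitz bound is required on a whole ball around `v`,
so that for two points `x` the smaller bound serves both. -/
def contractionSet (V : Set A) (g : A → B) : Set ((A × (B →L[ℝ] A)) × B) :=
  {p | ∃ (δ : ℝ) (M : ℝ≥0), ball p.1.1 δ ⊆ V ∧ LipschitzOnWith M g (ball p.1.1 δ) ∧
    ‖p.1.2‖ * M < 1 ∧ ‖p.1.2 p.2‖ < δ}

lemma isOpen_contractionSet : IsOpen (contractionSet V g) := by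
  rw [isOpen_iff_mem_nhds]
  rintro p ⟨δ, M, hball, hLip, hcontr, hlt⟩
  have hcont : Continuous fun q : (A × (B →L[ℝ] A)) × B => dist q.1.1 p.1.1 + ‖q.1.2 q.2‖ := by
    fun_prop
  have hcont' : Continuous fun q : (A × (B →L[ℝ] A)) × B => ‖q.1.2‖ * M := by fun_prop
  have hradius : ∀ᶠ q in 𝓝 p, dist q.1.1 p.1.1 + ‖q.1.2 q.2‖ < δ :=
    hcont.continuousAt.eventually_lt continuousAt_const (by simpa using hlt)
  have hfactor : ∀ᶠ q in 𝓝 p, ‖q.1.2‖ * M < 1 :=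
    hcont'.continuousAt.eventually_lt continuousAt_const hcontr
  filter_upwards [hradius, hfactor] with q hq hq'
  have hsub : ball q.1.1 (δ - dist q.1.1 p.1.1) ⊆ ball p.1.1 δ := ball_subset_ball' (by linarith)
  exact ⟨δ - dist q.1.1 p.1.1, M, hsub.trans hball, hLip.mono hsub, hq', by linarith⟩

lemma mem_contractionSet_of_clm_eq_zero {v : A} (hV : V ∈ 𝓝 v) (hg : ContDiffAt ℝ 1 g v) (x : B) :
    ((v, (0 : B →L[ℝ] A)), x) ∈ contractionSet V g := by
  obtain ⟨M, t, ht, hLip⟩ := hg.exists_lipschitzOnWith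
  obtain ⟨δ, hδ, hsub⟩ := Metric.mem_nhds_iff.1 (Filter.inter_mem ht hV)
  exact ⟨δ, M, hsub.trans inter_subset_right, hLip.mono (hsub.trans inter_subset_left), by simp,
    by simpa using hδ⟩

lemma norm_comp_lt_one_of_mem_contractionSet (h : (z, x) ∈ contractionSet V g) {g' : A →L[ℝ] B}
    (hg : HasFDerivAt g g' (z.1 + z.2 x)) : ‖g' ∘L z.2‖ < 1 := by
  obtain ⟨δ, M, -, hLip, hcontr, hlt⟩ := h
  have hg' : ‖g'‖ ≤ M := hg.le_of_lipschitzOn (isOpen_ball.mem_nhds (by simpa using hlt)) hLip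
  calc ‖g' ∘L z.2‖ ≤ ‖g'‖ * ‖z.2‖ := ContinuousLinearMap.opNorm_comp_le _ _
    _ ≤ M * ‖z.2‖ := by gcongr
    _ = ‖z.2‖ * M := mul_comm _ _
    _ < 1 := hcontr

/-- `x` solves `x = g (v + c x)` with parameter `z = (v, c)`, within the contraction regime. -/
structure IsContractiveFixedPoint (V : Set A) (g : A → B) (z : A × (B →L[ℝ] A)) (x : B) : Prop where
  mem_contractionSet : (z, x) ∈ contractionSet V g
  apply_eq : g (z.1 + z.2 x) = x

namespace IsContractiveFixedPoint

lemma mem (h : IsContractiveFixedPoint V g z x) : z.1 + z.2 x ∈ V := by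
  obtain ⟨δ, M, hball, -, -, hlt⟩ := h.mem_contractionSet
  exact hball (by simpa using hlt)

lemma unique (h : IsContractiveFixedPoint V g z x) (h' : IsContractiveFixedPoint V g z y) :
    x = y := by
  have eq_of_contraction : ∀ (δ : ℝ) (M : ℝ≥0), LipschitzOnWith M g (ball z.1 δ) →
      ‖z.2‖ * M < 1 → ‖z.2 x‖ < δ → ‖z.2 y‖ < δ → x = y := by
    intro δ M hLip hcontr hx hy
    have hle : ‖x - y‖ ≤ ‖z.2‖ * M * ‖x - y‖ := calc
      ‖x - y‖ = dist (g (z.1 + z.2 x)) (g (z.1 + z.2 y)) := by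
        rw [h.apply_eq, h'.apply_eq, dist_eq_norm]
      _ ≤ M * dist (z.1 + z.2 x) (z.1 + z.2 y) :=
        hLip.dist_le_mul _ (by simpa using hx) _ (by simpa using hy)
      _ = M * ‖z.2 (x - y)‖ := by rw [dist_add_left, dist_eq_norm, map_sub]
      _ ≤ M * (‖z.2‖ * ‖x - y‖) := by gcongr; exact z.2.le_opNorm _
      _ = ‖z.2‖ * M * ‖x - y‖ := by ring
    have hzero : ‖x - y‖ = 0 := by nlinarith [norm_nonneg (x - y)]
    exact sub_eq_zero.1 (norm_eq_zero.1 hzero)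
  obtain ⟨δ, M, -, hLip, hcontr, hlt⟩ := h.mem_contractionSet
  obtain ⟨δ', M', -, hLip', hcontr', hlt'⟩ := h'.mem_contractionSet
  rcases le_total δ δ' with hδ | hδ
  · exact eq_of_contraction δ' M' hLip' hcontr' (hlt.trans_le hδ) hlt'
  · exact eq_of_contraction δ M hLip hcontr hlt (hlt'.trans_le hδ)

end IsContractiveFixedPoint

/-- The parameters `(v, c)` for which `x = g (v + c x)` has a solution in the contraction
regime. -/
def contractiveDomain (V : Set A) (g : A → B) : Set (A × (B →L[ℝ] A)) :=
  {z | ∃ x, IsContractiveFixedPoint V g z x}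

/-- The unique solution of `x = g (v + c x)` in the contraction regime, as a function of
`z = (v, c)`; an arbitrary point if `z ∉ contractiveDomain V g`. -/
def contractiveFixedPoint (V : Set A) (g : A → B) (z : A × (B →L[ℝ] A)) : B :=
  Classical.epsilon (IsContractiveFixedPoint V g z)

lemma isContractiveFixedPoint_contractiveFixedPoint (hz : z ∈ contractiveDomain V g) :
    IsContractiveFixedPoint V g z (contractiveFixedPoint V g z) :=
  Classical.epsilon_spec hz

lemma IsContractiveFixedPoint.contractiveFixedPoint_eq (h : IsContractiveFixedPoint V g z x) :
    contractiveFixedPoint V g z = x :=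
  (isContractiveFixedPoint_contractiveFixedPoint ⟨x, h⟩).unique h

/-- The defect `x - g (v + c x)` of the fixed point equation, as a function of `((v, c), x)`. -/
def fixedPointDefect (g : A → B) (p : (A × (B →L[ℝ] A)) × B) : B :=
  p.2 - g (p.1.1 + p.1.2 p.2)

lemma contDiffAt_fixedPointDefect {m : ℕ∞ω} (hg : ContDiffAt ℝ m g (z.1 + z.2 x)) :
    ContDiffAt ℝ m (fixedPointDefect g) (z, x) := by
  have hin : ContDiff ℝ m (fun p : (A × (B →L[ℝ] A)) × B => p.1.1 + p.1.2 p.2) := by fun_prop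
  exact contDiffAt_snd.sub (ContDiffAt.comp (z, x) (by exact hg) hin.contDiffAt)

lemma fderiv_fixedPointDefect_comp_inr (hG : DifferentiableAt ℝ (fixedPointDefect g) (z, x))
    {g' : A →L[ℝ] B} (hg : HasFDerivAt g g' (z.1 + z.2 x)) :
    fderiv ℝ (fixedPointDefect g) (z, x) ∘L .inr ℝ _ _ = 1 - g' ∘L z.2 := by
  have hchain : HasFDerivAt (fun y => fixedPointDefect g (z, y))
      (fderiv ℝ (fixedPointDefect g) (z, x) ∘L .inr ℝ _ _) x :=
    HasFDerivAt.comp x (g := fixedPointDefect g) hG.hasFDerivAt (hasFDerivAt_prodMk_right z x)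
  have hinner : HasFDerivAt (fun y => z.1 + z.2 y) z.2 x := z.2.hasFDerivAt.const_add _
  have hdirect : HasFDerivAt (fun y => fixedPointDefect g (z, y)) (1 - g' ∘L z.2) x :=
    (hasFDerivAt_id x).sub (HasFDerivAt.comp x (g := g) hg hinner)
  exact hchain.unique hdirect

variable [CompleteSpace B]

lemma isInvertible_one_sub_of_norm_lt_one {T : B →L[ℝ] B} (hT : ‖T‖ < 1) :
    (1 - T).IsInvertible :=
  ⟨ContinuousLinearEquiv.ofUnit (Units.oneSub T hT), rfl⟩

variable [CompleteSpace A]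

lemma IsContractiveFixedPoint.exists_contDiffAt {m : ℕ∞ω} (hm : m ≠ 0)
    (hg : ContDiffAt ℝ m g (z.1 + z.2 x)) (h : IsContractiveFixedPoint V g z x) :
    ∃ ψ : A × (B →L[ℝ] A) → B, ContDiffAt ℝ m ψ z ∧
      ∀ᶠ z' in 𝓝 z, IsContractiveFixedPoint V g z' (ψ z') := by
  have hG : ContDiffAt ℝ m (fixedPointDefect g) (z, x) := contDiffAt_fixedPointDefect hg
  have hg' := (hg.differentiableAt hm).hasFDerivAt
  have hinv : (fderiv ℝ (fixedPointDefect g) (z, x) ∘L .inr ℝ _ _).IsInvertible := by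
    rw [fderiv_fixedPointDefect_comp_inr (hG.differentiableAt hm) hg']
    exact isInvertible_one_sub_of_norm_lt_one
      (norm_comp_lt_one_of_mem_contractionSet h.mem_contractionSet hg')
  have hψ := hG.contDiffAt_implicitFunction hm hinv
  refine ⟨hG.implicitFunction hm hinv, hψ, ?_⟩
  have hmem : ∀ᶠ z' in 𝓝 z, (z', hG.implicitFunction hm hinv z') ∈ contractionSet V g := by
    refine (continuousAt_id.prodMk hψ.continuousAt).eventually_mem
      (isOpen_contractionSet.mem_nhds ?_)
    rw [hG.implicitFunction_apply_self hm hinv]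
    exact h.mem_contractionSet
  filter_upwards [hmem, hG.eventually_apply_implicitFunction hm hinv] with z' hz' heq
  have hzero : fixedPointDefect g (z, x) = 0 := sub_eq_zero.2 h.apply_eq.symm
  exact ⟨hz', (sub_eq_zero.1 (heq.trans hzero)).symm⟩

lemma isOpen_contractiveDomain {m : ℕ∞ω} (hm : m ≠ 0) (hV : IsOpen V)
    (hg : ContDiffOn ℝ m g V) : IsOpen (contractiveDomain V g) := by
  rw [isOpen_iff_mem_nhds]
  rintro z ⟨x, hx⟩
  obtain ⟨ψ, -, hψ⟩ := hx.exists_contDiffAt hm (hg.contDiffAt (hV.mem_nhds hx.mem))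
  filter_upwards [hψ] with z' hz' using ⟨_, hz'⟩

lemma contDiffOn_contractiveFixedPoint {m : ℕ∞ω} (hm : m ≠ 0) (hV : IsOpen V)
    (hg : ContDiffOn ℝ m g V) :
    ContDiffOn ℝ m (contractiveFixedPoint V g) (contractiveDomain V g) := by
  rintro z ⟨x, hx⟩
  obtain ⟨ψ, hψm, hψ⟩ := hx.exists_contDiffAt hm (hg.contDiffAt (hV.mem_nhds hx.mem))
  refine (hψm.congr_of_eventuallyEq ?_).contDiffWithinAt
  filter_upwards [hψ] with z' hz' using hz'.contractiveFixedPoint_eq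

end FixedPoint

section Shear

variable {X E F : Type*} [NormedAddCommGroup X] [NormedSpace ℝ X] [NormedAddCommGroup E]
  [NormedSpace ℝ E] [NormedAddCommGroup F] [NormedSpace ℝ F]

lemma isC1DiffeoOn_of_invOn {f : X → E} {f' : E → X} {s : Set X} {t : Set E}
    (hf : ContDiffOn ℝ 1 f s) (hf' : ContDiffOn ℝ 1 f' t) (hinv : InvOn f' f s t)
    (hst : MapsTo f s t) (hts : MapsTo f' t s) : IsC1DiffeoOn f s t :=
  have hbij : BijOn f s t := hinv.bijOn hst hts
  ⟨hf, hbij.injOn, hbij.image_eq, f', hf', hinv⟩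

/-- `Y w` is, for every `w`, a linear right inverse of `δ` with values in the kernel of `L`. -/
structure IsShear (δ : X →L[ℝ] E) (L : X →L[ℝ] F) (Y : F → E →L[ℝ] X) : Prop where
  map_apply : ∀ w x, δ (Y w x) = x
  map_apply_eq_zero : ∀ w x, L (Y w x) = 0

/-- The retraction `φ ↦ φ - Y(Lφ)(δφ)` onto the kernel of `δ`. -/
def shearRetraction (δ : X →L[ℝ] E) (L : X →L[ℝ] F) (Y : F → E →L[ℝ] X) (φ : X) : X :=
  φ - Y (L φ) (δ φ)

/-- The parametrization `ζ ↦ ζ + Y(Lζ)(h ζ)`, over the kernel of `δ`, of the set on which `δ`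
takes the prescribed value `h` along the fibres of the shear retraction. -/
def shearGraph (L : X →L[ℝ] F) (Y : F → E →L[ℝ] X) (h : X → E) (ζ : X) : X :=
  ζ + Y (L ζ) (h ζ)

variable {δ : X →L[ℝ] E} {L : X →L[ℝ] F} {Y : F → E →L[ℝ] X} {h : X → E} {s : Set X} {T : Set F}

namespace IsShear

lemma map_shearRetraction (hY : IsShear δ L Y) (φ : X) : δ (shearRetraction δ L Y φ) = 0 := by
  simp [shearRetraction, hY.map_apply]

lemma map_shearRetraction_eq (hY : IsShear δ L Y) (φ : X) :
    L (shearRetraction δ L Y φ) = L φ := by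
  simp [shearRetraction, hY.map_apply_eq_zero]

lemma map_shearGraph (hY : IsShear δ L Y) {ζ : X} (hζ : δ ζ = 0) :
    δ (shearGraph L Y h ζ) = h ζ := by
  simp [shearGraph, hY.map_apply, hζ]

lemma map_shearGraph_eq (hY : IsShear δ L Y) (ζ : X) : L (shearGraph L Y h ζ) = L ζ := by
  simp [shearGraph, hY.map_apply_eq_zero]

lemma shearRetraction_shearGraph (hY : IsShear δ L Y) {ζ : X} (hζ : δ ζ = 0) :
    shearRetraction δ L Y (shearGraph L Y h ζ) = ζ := by
  rw [shearRetraction, hY.map_shearGraph_eq, hY.map_shearGraph hζ, shearGraph, add_sub_cancel_right]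

lemma shearGraph_shearRetraction (hY : IsShear δ L Y) {φ : X}
    (hφ : h (shearRetraction δ L Y φ) = δ φ) :
    shearGraph L Y h (shearRetraction δ L Y φ) = φ := by
  rw [shearGraph, hY.map_shearRetraction_eq, hφ, shearRetraction, sub_add_cancel]

lemma invOn_shearGraph (hY : IsShear δ L Y) (hs : ∀ ζ ∈ s, δ ζ = 0) :
    InvOn (shearRetraction δ L Y) (shearGraph L Y h) s (shearGraph L Y h '' s) := by
  have hleft : LeftInvOn (shearRetraction δ L Y) (shearGraph L Y h) s :=
    fun ζ hζ => hY.shearRetraction_shearGraph (hs ζ hζ)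
  exact ⟨hleft, hleft.rightInvOn_image⟩

lemma mapsTo_shearRetraction (hY : IsShear δ L Y) (hs : ∀ ζ ∈ s, δ ζ = 0) :
    MapsTo (shearRetraction δ L Y) (shearGraph L Y h '' s) s :=
  mapsTo_image_iff.2 fun ζ hζ => by
    rwa [Function.comp_apply, hY.shearRetraction_shearGraph (hs ζ hζ)]

lemma contDiffOn_shearRetraction (hYs : ContDiffOn ℝ 1 Y T) :
    ContDiffOn ℝ 1 (shearRetraction δ L Y) (L ⁻¹' T) :=
  contDiffOn_id.sub ((hYs.comp L.contDiff.contDiffOn (mapsTo_preimage _ _)).clm_apply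
    δ.contDiff.contDiffOn)

lemma contDiffOn_apply_shear (hYs : ContDiffOn ℝ 1 Y T) (hsT : s ⊆ L ⁻¹' T)
    (hh : ContDiffOn ℝ 1 h s) : ContDiffOn ℝ 1 (fun ζ => Y (L ζ) (h ζ)) s :=
  (hYs.comp L.contDiff.contDiffOn hsT).clm_apply hh

lemma image_shearGraph_subset (hY : IsShear δ L Y) (hsT : s ⊆ L ⁻¹' T) :
    shearGraph L Y h '' s ⊆ L ⁻¹' T := by
  rintro _ ⟨ζ, hζ, rfl⟩
  rw [mem_preimage, hY.map_shearGraph_eq]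
  exact hsT hζ

lemma isC1DiffeoOn_shearRetraction (hY : IsShear δ L Y) (hYs : ContDiffOn ℝ 1 Y T)
    (hs : ∀ ζ ∈ s, δ ζ = 0) (hsT : s ⊆ L ⁻¹' T) (hh : ContDiffOn ℝ 1 h s) :
    IsC1DiffeoOn (shearRetraction δ L Y) (shearGraph L Y h '' s) s :=
  isC1DiffeoOn_of_invOn ((contDiffOn_shearRetraction hYs).mono (hY.image_shearGraph_subset hsT))
    (contDiffOn_id.add (contDiffOn_apply_shear hYs hsT hh)) (hY.invOn_shearGraph hs).symm
    (hY.mapsTo_shearRetraction hs) (mapsTo_image _ _)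

lemma isAlmostGraphOver_image_shearGraph (hY : IsShear δ L Y) (hYs : ContDiffOn ℝ 1 Y T)
    (hs : ∀ ζ ∈ s, δ ζ = 0) (hsT : s ⊆ L ⁻¹' T) (hh : ContDiffOn ℝ 1 h s) :
    IsAlmostGraphOver (shearGraph L Y h '' s) {ζ | δ ζ = 0} := by
  have hα : ContDiffOn ℝ 1 (fun ζ => Y (L ζ) (h ζ)) s := contDiffOn_apply_shear hYs hsT hh
  refine ⟨s, fun ζ => Y (L ζ) (h ζ), hs, hα, ?_, ?_, ?_⟩
  · rintro _ ⟨hζ, η, hη, rfl⟩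
    have hhη : h η = 0 := by rw [← hY.map_shearGraph (h := h) (hs η hη), hs _ hζ]
    have hfix : shearGraph L Y h η = η := by simp [shearGraph, hhη]
    simp [hfix, hhη]
  · rintro ζ ⟨hζ, hmem⟩ (hzero : δ (Y (L ζ) (h ζ)) = 0)
    rw [hY.map_apply] at hzero
    exact hmem ⟨ζ, hζ, by simp [shearGraph, hzero]⟩
  · exact isC1DiffeoOn_of_invOn (contDiffOn_id.add hα)
      ((contDiffOn_shearRetraction hYs).mono (hY.image_shearGraph_subset hsT))
      (hY.invOn_shearGraph hs) (mapsTo_image _ _) (hY.mapsTo_shearRetraction hs)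

end IsShear

end Shear

section StronglyDifferentiableFamily

variable {X E : Type*} [NormedAddCommGroup X] [NormedSpace ℝ X] [NormedAddCommGroup E]
  [NormedSpace ℝ E] {T T' : ℝ → X →L[ℝ] E} {s : Set ℝ} {C : ℝ}

lemma norm_clm_sub_le_of_norm_hasDerivWithinAt_le (hs : Convex ℝ s)
    (hT : ∀ t ∈ s, ∀ x, HasDerivWithinAt (T · x) (T' t x) s t) (hT' : ∀ t ∈ s, ‖T' t‖ ≤ C)
    {t u : ℝ} (ht : t ∈ s) (hu : u ∈ s) : ‖T u - T t‖ ≤ C * ‖u - t‖ := by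
  have hC : 0 ≤ C := (norm_nonneg _).trans (hT' t ht)
  refine ContinuousLinearMap.opNorm_le_bound _ (by positivity) fun x => ?_
  have hx : ‖T u x - T t x‖ ≤ C * ‖x‖ * ‖u - t‖ :=
    hs.norm_image_sub_le_of_norm_hasDerivWithin_le (f := (T · x)) (fun v hv => hT v hv x)
      (fun v hv => (T' v).le_of_opNorm_le (hT' v hv) x) ht hu
  exact hx.trans_eq (by ring)

lemma continuousOn_clm_of_norm_hasDerivWithinAt_le (hs : Convex ℝ s)
    (hT : ∀ t ∈ s, ∀ x, HasDerivWithinAt (T · x) (T' t x) s t) (hT' : ∀ t ∈ s, ‖T' t‖ ≤ C) :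
    ContinuousOn T s := by
  have hLip : LipschitzOnWith C.toNNReal T s := LipschitzOnWith.of_dist_le_mul fun t ht u hu => by
    rw [dist_eq_norm, dist_eq_norm]
    exact (norm_clm_sub_le_of_norm_hasDerivWithinAt_le hs hT hT' hu ht).trans
      (mul_le_mul_of_nonneg_right C.le_coe_toNNReal (norm_nonneg _))
  exact hLip.continuousOn

lemma continuousOn_uncurry_clm_of_norm_le (hT : ∀ x, ContinuousOn (T · x) s)
    (hC : ∀ t ∈ s, ‖T t‖ ≤ C) : ContinuousOn (fun p : X × ℝ => T p.2 p.1) (univ ×ˢ s) := by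
  rintro ⟨x, t⟩ ⟨-, ht⟩
  have hfixed : ContinuousWithinAt (fun p : X × ℝ => T p.2 x) (univ ×ˢ s) (x, t) :=
    ((hT x).comp continuousOn_snd fun p hp => hp.2) (x, t) ⟨mem_univ _, ht⟩
  have hbound : ∀ᶠ p : X × ℝ in 𝓝[univ ×ˢ s] (x, t), ‖T p.2 (p.1 - x)‖ ≤ C * ‖p.1 - x‖ := by
    filter_upwards [self_mem_nhdsWithin] with p hp using (T p.2).le_of_opNorm_le (hC p.2 hp.2) _
  have hlim : Tendsto (fun p : X × ℝ => C * ‖p.1 - x‖) (𝓝[univ ×ˢ s] (x, t)) (𝓝 0) := by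
    have hcont : Continuous fun p : X × ℝ => C * ‖p.1 - x‖ := by fun_prop
    simpa using (hcont.tendsto (x, t)).mono_left (nhdsWithin_le_nhds (s := univ ×ˢ s))
  have hsum := (squeeze_zero_norm' hbound hlim).add hfixed
  rw [zero_add] at hsum
  exact hsum.congr fun p => by rw [map_sub, sub_add_cancel]

lemma hasFDerivWithinAt_uncurry_clm (hs : Convex ℝ s)
    (hT : ∀ t ∈ s, ∀ x, HasDerivWithinAt (T · x) (T' t x) s t) (hT' : ∀ t ∈ s, ‖T' t‖ ≤ C)
    (x : X) {t : ℝ} (ht : t ∈ s) :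
    HasFDerivWithinAt (fun p : X × ℝ => T p.2 p.1)
      (T t ∘L .fst ℝ _ _ + .toSpanSingleton ℝ (T' t x) ∘L .snd ℝ _ _) (univ ×ˢ s) (x, t) := by
  have htime : HasFDerivWithinAt (fun p : X × ℝ => T p.2 x)
      (.toSpanSingleton ℝ (T' t x) ∘L .snd ℝ _ _) (univ ×ˢ s) (x, t) :=
    HasFDerivWithinAt.comp (x, t) (g := (T · x)) (t := s) (f := Prod.snd)
      (hT t ht x).hasFDerivWithinAt hasFDerivWithinAt_snd (fun q hq => hq.2)
  have hspace : HasFDerivWithinAt (fun p : X × ℝ => T t (p.1 - x))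
      (T t ∘L .fst ℝ _ _) (univ ×ˢ s) (x, t) :=
    (T t).hasFDerivAt.comp_hasFDerivWithinAt (f := fun p : X × ℝ => p.1 - x) (x, t)
      (hasFDerivWithinAt_fst.sub_const x)
  have hremainder : HasFDerivWithinAt (fun p : X × ℝ => (T p.2 - T t) (p.1 - x))
      (0 : X × ℝ →L[ℝ] E) (univ ×ˢ s) (x, t) := by
    simp only [hasFDerivWithinAt_iff_isLittleO, sub_self, map_zero, sub_zero,
      zero_apply]
    have hcont : ContinuousOn (fun p : X × ℝ => ‖T p.2 - T t‖) (univ ×ˢ s) :=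
      (((continuousOn_clm_of_norm_hasDerivWithinAt_le hs hT hT').comp continuousOn_snd
        fun p hp => hp.2).sub continuousOn_const).norm
    refine Asymptotics.isLittleO_iff.2 fun c hc => ?_
    filter_upwards [(hcont (x, t) ⟨mem_univ _, ht⟩).eventually_lt_const (by simpa using hc)]
      with p hp
    exact ((T p.2 - T t).le_of_opNorm_le hp.le _).trans
      (mul_le_mul_of_nonneg_left (norm_fst_le (p - (x, t))) hc.le)
  refine HasFDerivWithinAt.congr' (((hspace.add htime).add hremainder).congr_fderiv (add_zero _))
    (fun p _ => ?_) ⟨mem_univ _, ht⟩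
  simp only [Pi.add_apply, map_sub, sub_apply]
  abel

lemma contDiffOn_uncurry_clm (hs : Convex ℝ s)
    (hT : ∀ t ∈ s, ∀ x, HasDerivWithinAt (T · x) (T' t x) s t) (hT' : ∀ t ∈ s, ‖T' t‖ ≤ C)
    (hcont : ∀ x, ContinuousOn (T' · x) s) :
    ContDiffOn ℝ 1 (fun p : X × ℝ => T p.2 p.1) (univ ×ˢ s) := by
  rw [show (1 : WithTop ℕ∞) = 0 + 1 by simp,
    contDiffOn_succ_iff_hasFDerivWithinAt (by simp)]
  intro p hp
  refine ⟨univ ×ˢ s, by rw [insert_eq_of_mem hp]; exact self_mem_nhdsWithin, by simp,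
    fun q => T q.2 ∘L .fst ℝ _ _ + .toSpanSingleton ℝ (T' q.2 q.1) ∘L .snd ℝ _ _,
    fun q hq => hasFDerivWithinAt_uncurry_clm hs hT hT' q.1 hq.2, ?_⟩
  have heval : ContinuousOn (fun q : X × ℝ => T q.2) (univ ×ˢ s) :=
    (continuousOn_clm_of_norm_hasDerivWithinAt_le hs hT hT').comp continuousOn_snd
      fun q hq => hq.2
  have hderiv : ContinuousOn (fun q : X × ℝ =>
      ContinuousLinearMap.toSpanSingletonCLE (𝕜 := ℝ) (E := E) (T' q.2 q.1)) (univ ×ˢ s) :=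
    (ContinuousLinearMap.toSpanSingletonCLE (𝕜 := ℝ) (E := E)).continuous.comp_continuousOn
      (continuousOn_uncurry_clm_of_norm_le hcont hT')
  exact contDiffOn_zero.2 ((heval.clm_comp continuousOn_const).add
    (hderiv.clm_comp continuousOn_const))

end StronglyDifferentiableFamily

section RightInverses

variable {X E F : Type*} [NormedAddCommGroup X] [NormedSpace ℝ X] [NormedAddCommGroup E]
  [NormedSpace ℝ E] [NormedAddCommGroup F] [NormedSpace ℝ F]

lemma exists_mem_inf_ker_of_forall_norm_lt [FiniteDimensional ℝ F] {δ : X →L[ℝ] E}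
    {L : X →L[ℝ] F} {M : Submodule ℝ X} {x : E} (h : ∀ η > 0, ∃ z ∈ M, δ z = x ∧ ‖L z‖ < η) :
    ∃ z ∈ M ⊓ L.ker, δ z = x := by
  obtain ⟨z₀, hz₀M, hz₀, -⟩ := h 1 one_pos
  have hclosed : IsClosed ((M ⊓ δ.ker).map L.toLinearMap : Set F) :=
    Submodule.closed_of_finiteDimensional _
  have hmem : L z₀ ∈ closure ((M ⊓ δ.ker).map L.toLinearMap : Set F) := by
    refine Metric.mem_closure_iff.2 fun η hη => ?_
    obtain ⟨z, hzM, hz, hLz⟩ := h η hη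
    refine ⟨L (z₀ - z), ⟨z₀ - z, ⟨M.sub_mem hz₀M hzM, by simp [hz, hz₀]⟩, rfl⟩, ?_⟩
    simpa [dist_eq_norm] using hLz
  rw [hclosed.closure_eq] at hmem
  obtain ⟨k, ⟨hkM, hk : δ k = 0⟩, hLk : L k = L z₀⟩ := hmem
  exact ⟨z₀ - k, ⟨M.sub_mem hz₀M hkM, by simp [hLk]⟩, by simp [hk, hz₀]⟩

/-- The continuous linear right inverses of `δ` with values in `Z`. -/
def rightInverses (δ : X →L[ℝ] E) (Z : Submodule ℝ X) : Set (E →L[ℝ] X) :=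
  {Y | ∀ x, δ (Y x) = x ∧ Y x ∈ Z}

lemma rightInverses_mono (δ : X →L[ℝ] E) : Monotone (rightInverses δ) :=
  fun _ _ hZ _ hY x => ⟨(hY x).1, hZ (hY x).2⟩

lemma convex_rightInverses (δ : X →L[ℝ] E) (Z : Submodule ℝ X) :
    Convex ℝ (rightInverses δ Z) := by
  intro Y hY Y' hY' a b _ _ hab x
  exact ⟨by simp [(hY x).1, (hY' x).1, ← add_smul, hab],
    Z.add_mem (Z.smul_mem a (hY x).2) (Z.smul_mem b (hY' x).2)⟩

variable [FiniteDimensional ℝ E]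

lemma nonempty_rightInverses {δ : X →L[ℝ] E} {Z : Submodule ℝ X} (h : ∀ x, ∃ z ∈ Z, δ z = x) :
    (rightInverses δ Z).Nonempty := by
  have hrange : (δ ∘L Z.subtypeL).range = ⊤ := LinearMap.range_eq_top.2 fun x => by
    obtain ⟨z, hz, rfl⟩ := h x
    exact ⟨⟨z, hz⟩, rfl⟩
  obtain ⟨Y, hY⟩ := ContinuousLinearMap.exists_rightInverse_of_surjective _ hrange
  exact ⟨Z.subtypeL ∘L Y, fun x => ⟨DFunLike.congr_fun hY x, (Y x).2⟩⟩

lemma exists_contDiff_rightInverse {m : ℕ∞} (δ : X →L[ℝ] E) {Z : ℝ → Submodule ℝ X}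
    (hZ : Antitone Z) (h : ∀ ρ x, ∃ z ∈ Z ρ, δ z = x) :
    ∃ Y : ℝ → E →L[ℝ] X, ContDiff ℝ m Y ∧ ∀ ρ, Y ρ ∈ rightInverses δ (Z ρ) := by
  have hlocal : ∀ ρ, ∃ Y, ∀ᶠ σ in 𝓝 ρ, Y ∈ rightInverses δ (Z σ) := fun ρ => by
    obtain ⟨Y, hY⟩ := nonempty_rightInverses (h (ρ + 1))
    refine ⟨Y, ?_⟩
    filter_upwards [Iio_mem_nhds (lt_add_one ρ)] with σ hσ
    exact rightInverses_mono δ (hZ (le_of_lt hσ)) hY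
  obtain ⟨Y, hY⟩ := exists_contMDiffMap_forall_mem_convex_of_local_const (n := m)
    (modelWithCornersSelf ℝ ℝ) (fun ρ => convex_rightInverses δ (Z ρ)) hlocal
  exact ⟨Y, Y.contMDiff.contDiff, hY⟩

end RightInverses

section SolutionManifold

-- The instances inherited from the submodule agree with those of the norm only up to unfolding,
-- which instance resolution does not see.
local instance {r : ℝ} {E : Type*} [NormedAddCommGroup E] [NormedSpace ℝ E] :
    AddCommMonoid (C1 r E) := NormedAddCommGroup.toAddCommGroup.toAddCommMonoid
local instance {r : ℝ} {E : Type*} [NormedAddCommGroup E] [NormedSpace ℝ E] :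
    Module ℝ (C1 r E) := NormedSpace.toModule
local instance {r : ℝ} {E : Type*} [NormedAddCommGroup E] [NormedSpace ℝ E] :
    TopologicalSpace (C1 r E) := UniformSpace.toTopologicalSpace

lemma continuousOn_extFun {r : ℝ} {E : Type*} [TopologicalSpace E] [Zero E] (φ : C(Icc0 r, E)) :
    ContinuousOn (extFun φ) (Icc0 r) := by
  have hrestrict : (Icc0 r).domRestrict (extFun φ) = φ := by
    ext t
    exact dif_pos t.2
  rw [continuousOn_iff_continuous_domRestrict, hrestrict]
  exact φ.continuous

lemma norm_extFun_le {r : ℝ} {E : Type*} [NormedAddCommGroup E] (φ : C(Icc0 r, E)) (t : ℝ) :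
    ‖extFun φ t‖ ≤ ‖φ‖ := by
  rw [extFun]
  split_ifs with ht
  · exact φ.norm_coe_le_norm _
  · simp

namespace C1

variable {r : ℝ} {E : Type*} [NormedAddCommGroup E] [NormedSpace ℝ E]

/-- The inclusion of `C¹([-r,0],E)` into `C([-r,0],E)`. -/
def toC : C1 r E →L[ℝ] C(Icc0 r, E) := .fst ℝ _ _ ∘L (C1sub r E).subtypeL

/-- The evaluation `φ ↦ φ(t)` on `C¹([-r,0],E)`; zero for `t ∉ [-r,0]`. -/
def evalCLM (t : ℝ) : C1 r E →L[ℝ] E :=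
  LinearMap.mkContinuous
    { toFun := fun φ => evC φ t
      map_add' := fun φ ψ => by simp [evC, extFun_add]
      map_smul' := fun c φ => by simp [evC, extFun_smul] }
    1 fun φ => by
      rw [one_mul]
      exact (norm_extFun_le φ.1.1 t).trans (norm_fst_le φ.1)

/-- The evaluation `φ ↦ φ'(t)` on `C¹([-r,0],E)`; zero for `t ∉ [-r,0]`. -/
def derivCLM (t : ℝ) : C1 r E →L[ℝ] E :=
  LinearMap.mkContinuous
    { toFun := fun φ => dvC φ t
      map_add' := fun φ ψ => by simp [dvC, extFun_add]
      map_smul' := fun c φ => by simp [dvC, extFun_smul] }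
    1 fun φ => by
      rw [one_mul]
      exact (norm_extFun_le φ.1.2 t).trans (norm_snd_le φ.1)

@[simp] lemma evalCLM_apply (t : ℝ) (φ : C1 r E) : evalCLM t φ = evC φ t := rfl

lemma norm_derivCLM_le (t : ℝ) : ‖(derivCLM t : C1 r E →L[ℝ] E)‖ ≤ 1 :=
  LinearMap.mkContinuous_norm_le _ zero_le_one _

lemma hasDerivWithinAt_evalCLM (φ : C1 r E) {t : ℝ} (ht : t ∈ Icc0 r) :
    HasDerivWithinAt (evalCLM · φ) (derivCLM t φ) (Icc0 r) t :=
  φ.2 t ht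

lemma contDiffOn_evC :
    ContDiffOn ℝ 1 (fun p : C1 r E × ℝ => evC p.1 p.2) (univ ×ˢ Icc0 r) := by
  simp only [← evalCLM_apply]
  exact contDiffOn_uncurry_clm (convex_Icc _ _) (fun t ht φ => hasDerivWithinAt_evalCLM φ ht)
    (fun t _ => norm_derivCLM_le t) fun φ => continuousOn_extFun φ.1.2

/-- The restriction to `[-r,0]` of a continuously differentiable map on `ℝ`. -/
def restrict (r : ℝ) (f : ℝ → E) (hf : ContDiff ℝ 1 f) : C1 r E :=
  ⟨(⟨fun t => f t, hf.continuous.comp continuous_subtype_val⟩,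
    ⟨fun t => deriv f t, hf.continuous_deriv_one.comp continuous_subtype_val⟩), by
    intro t ht
    have hderiv : HasDerivWithinAt f (deriv f t) (Icc0 r) t :=
      (hf.differentiable one_ne_zero t).hasDerivAt.hasDerivWithinAt
    simp only [extFun, ht, ↓reduceDIte, ContinuousMap.coe_mk]
    exact hderiv.congr_of_mem (fun s hs => dif_pos hs) ht⟩

lemma evC_restrict {f : ℝ → E} (hf : ContDiff ℝ 1 f) {t : ℝ} (ht : t ∈ Icc0 r) :
    evC (restrict r f hf) t = f t :=
  dif_pos ht

lemma dvC_restrict {f : ℝ → E} (hf : ContDiff ℝ 1 f) {t : ℝ} (ht : t ∈ Icc0 r) :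
    dvC (restrict r f hf) t = deriv f t :=
  dif_pos ht

lemma exists_dvC_zero_eq_norm_le (hr : 0 ≤ r) (x : E) {ε : ℝ} (hε : 0 < ε) :
    ∃ φ : C1 r E, evC φ 0 = 0 ∧ dvC φ 0 = x ∧ (∀ u ∈ Icc (-r) (-ε), evC φ u = 0) ∧
      ‖toC φ‖ ≤ ε * ‖x‖ := by
  let b : ContDiffBump (0 : ℝ) := ⟨ε / 2, ε, half_pos hε, half_lt_self hε⟩
  let f : ℝ → E := fun t => (t * b t) • x
  have hf : ContDiff ℝ 1 f := (contDiff_id.mul b.contDiff).smul contDiff_const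
  have h0 : (0 : ℝ) ∈ Icc0 r := by simpa using hr
  have hderiv : HasDerivAt f x 0 := by
    have hid : HasDerivAt (fun t : ℝ => t • x) x 0 := by
      simpa using (hasDerivAt_id (0 : ℝ)).smul_const x
    refine hid.congr_of_eventuallyEq ?_
    filter_upwards [b.eventuallyEq_one] with t ht
    simp [f, ht]
  have habs : ∀ t, |t * b t| ≤ ε := by
    intro t
    rw [abs_mul, abs_of_nonneg b.nonneg]
    rcases le_total ε |t| with ht | ht
    · rw [b.zero_of_le_dist (by simpa using ht), mul_zero]
      exact hε.le
    · exact (mul_le_of_le_one_right (abs_nonneg t) b.le_one).trans ht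
  refine ⟨restrict r f hf, ?_, ?_, fun u hu => ?_, ?_⟩
  · simp [evC_restrict hf h0, f]
  · rw [dvC_restrict hf h0, hderiv.deriv]
  · have hu0 : u ≤ 0 := hu.2.trans (neg_nonpos.2 hε.le)
    have hbu : b u = 0 := b.zero_of_le_dist (by
      rw [Real.dist_0_eq_abs, abs_of_nonpos hu0]
      exact le_neg.1 hu.2)
    simp [evC_restrict hf ⟨hu.1, hu0⟩, f, hbu]
  · refine (ContinuousMap.norm_le _ (by positivity)).2 fun t => ?_
    calc ‖(t * b t) • x‖ = |t * b t| * ‖x‖ := by rw [norm_smul, Real.norm_eq_abs]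
      _ ≤ ε * ‖x‖ := by gcongr; exact habs t

/-- The subspace of the maps in `C¹([-r,0],E)` which vanish on `s`. -/
def vanishing (r : ℝ) (E : Type*) [NormedAddCommGroup E] [NormedSpace ℝ E] (s : Set ℝ) :
    Submodule ℝ (C1 r E) :=
  ⨅ u ∈ s, (evalCLM u).ker

lemma mem_vanishing {s : Set ℝ} {φ : C1 r E} : φ ∈ vanishing r E s ↔ ∀ u ∈ s, evC φ u = 0 := by
  simp [vanishing]

lemma vanishing_anti : Antitone (vanishing r E) :=
  fun _ _ hst _ hφ => mem_vanishing.2 fun u hu => mem_vanishing.1 hφ u (hst hu)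

lemma exists_mem_vanishing_norm_map_lt {F : Type*} [NormedAddCommGroup F] [NormedSpace ℝ F]
    (hr : 0 ≤ r) (L : C(Icc0 r, E) →L[ℝ] F) (x : E) (ρ : ℝ) {η : ℝ} (hη : 0 < η) :
    ∃ φ ∈ vanishing r E (insert 0 {u ∈ Icc0 r | 1 ≤ -u * ρ}), dvC φ 0 = x ∧ ‖L (toC φ)‖ < η := by
  have hsmall : ∀ᶠ ε in 𝓝[>] (0 : ℝ), ‖L‖ * (ε * ‖x‖) < η := by
    have hcont : Continuous fun ε => ‖L‖ * (ε * ‖x‖) := by fun_prop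
    exact (hcont.continuousWithinAt (x := 0)).eventually_lt_const (by simpa using hη)
  have hρ : 0 < (|ρ| + 1)⁻¹ := by positivity
  obtain ⟨ε, hεη, hε, hερ⟩ := (hsmall.and (Ioc_mem_nhdsGT hρ)).exists
  obtain ⟨φ, hφ0, hφ, hvan, hnorm⟩ := exists_dvC_zero_eq_norm_le hr x hε
  refine ⟨φ, mem_vanishing.2 ?_, hφ, (L.le_of_opNorm_le_of_le le_rfl hnorm).trans_lt hεη⟩
  rintro u (rfl | ⟨hu, hu1⟩)
  · exact hφ0
  have hinv : (|ρ| + 1)⁻¹ ≤ -u := by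
    rw [inv_le_iff_one_le_mul₀ (by positivity)]
    nlinarith [le_abs_self ρ, hu.2]
  exact hvan u ⟨hu.1, by linarith⟩

lemma exists_contDiff_dvC_section [FiniteDimensional ℝ E] {F : Type*} [NormedAddCommGroup F]
    [NormedSpace ℝ F] [FiniteDimensional ℝ F] (hr : 0 ≤ r) (L : C(Icc0 r, E) →L[ℝ] F) :
    ∃ Y : ℝ → E →L[ℝ] C1 r E, ContDiff ℝ 1 Y ∧ ∀ ρ x, dvC (Y ρ x) 0 = x ∧ L (toC (Y ρ x)) = 0 ∧
      evC (Y ρ x) 0 = 0 ∧ ∀ u ∈ Icc0 r, 1 ≤ -u * ρ → evC (Y ρ x) u = 0 := by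
  let s : ℝ → Set ℝ := fun ρ => insert 0 {u ∈ Icc0 r | 1 ≤ -u * ρ}
  have hs : Monotone s := fun ρ σ hρσ => insert_subset_insert fun u hu =>
    ⟨hu.1, hu.2.trans (mul_le_mul_of_nonneg_left hρσ (neg_nonneg.2 hu.1.2))⟩
  obtain ⟨Y, hYs, hY⟩ := exists_contDiff_rightInverse (derivCLM 0)
    (Z := fun ρ => vanishing r E (s ρ) ⊓ (L ∘L toC).ker)
    (fun ρ σ hρσ => inf_le_inf_right _ (vanishing_anti (hs hρσ))) fun ρ x =>
      exists_mem_inf_ker_of_forall_norm_lt fun η hη => exists_mem_vanishing_norm_map_lt hr L x ρ hη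
  refine ⟨Y, hYs, fun ρ x => ?_⟩
  obtain ⟨hδ, hvan, hL⟩ := hY ρ x
  exact ⟨hδ, hL, mem_vanishing.1 hvan 0 (mem_insert _ _),
    fun u hu hρ => mem_vanishing.1 hvan u (Or.inr ⟨hu, hρ⟩)⟩

end C1

namespace Setting

variable {r : ℝ} {n kk : ℕ} {F : Type*} [NormedAddCommGroup F] [NormedSpace ℝ F]
  (S : Setting r n kk F) (J : Finset (Fin kk)) {Y : F → (Fin n → ℝ) →L[ℝ] C1 r (Fin n → ℝ)}

/-- The map `φ ↦ Lφ` on `C¹`, as a continuous linear map. -/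
def LofCLM : C1 r (Fin n → ℝ) →L[ℝ] F := S.L ∘L C1.toC

@[simp] lemma LofCLM_apply (φ : C1 r (Fin n → ℝ)) : S.LofCLM φ = S.Lof φ := rfl

variable {S} in
lemma neg_d_mem_Icc0 {w : F} (hw : w ∈ S.W) (k : Fin kk) : -(S.d k w) ∈ Icc0 r :=
  ⟨neg_le_neg (S.d_mem k w hw).2, neg_nonpos.2 (S.d_mem k w hw).1⟩

lemma WJ_subset_WupJ : S.WJ J ⊆ S.WupJ J := fun _ hw => ⟨hw.1, hw.2.2⟩

lemma WupJ_subset_W : S.WupJ J ⊆ S.W := fun _ hw => hw.1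

lemma isOpen_WupJ : IsOpen (S.WupJ J) := by
  rw [isOpen_iff_mem_nhds]
  rintro w ⟨hw, hpos⟩
  have hevent : ∀ᶠ w' in 𝓝 w, ∀ k ∉ J, 0 < S.d k w' := eventually_all.2 fun k =>
    eventually_imp_distrib_left.2 fun hk => continuousAt_const.eventually_lt
      ((S.d_smooth k).continuousOn.continuousAt (S.Wopen.mem_nhds hw)) (hpos k hk)
  exact (S.Wopen.eventually_mem hw).and hevent

section Smoothness

variable {S} {G : Type*} [NormedAddCommGroup G] [NormedSpace ℝ G] {T : Set G}

lemma contDiffOn_evC_neg_d {φ : G → C1 r (Fin n → ℝ)} {w : G → F} (hφ : ContDiffOn ℝ 1 φ T)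
    (hw : ContDiffOn ℝ 1 w T) (hT : MapsTo w T S.W) (k : Fin kk) :
    ContDiffOn ℝ 1 (fun p => evC (φ p) (-(S.d k (w p)))) T :=
  C1.contDiffOn_evC.comp (hφ.prodMk ((S.d_smooth k).comp hw hT).neg)
    fun _ hp => ⟨mem_univ _, neg_d_mem_Icc0 (hT hp) k⟩

end Smoothness

lemma contDiffOn_hat : ContDiffOn ℝ 1 S.hat (S.LofCLM ⁻¹' S.W) :=
  contDiffOn_pi.2 fun k => contDiffOn_evC_neg_d (φ := id) (w := S.LofCLM) contDiffOn_id
    S.LofCLM.contDiff.contDiffOn (mapsTo_preimage _ _) k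

/-- A function which is large enough on `W^J` to bound the inverses of the delays `d_k`, `k ∉ J`,
and nevertheless smooth. -/
def rate (w : F) : ℝ := ∑ k ∈ Jᶜ, (S.d k w)⁻¹

lemma contDiffOn_rate : ContDiffOn ℝ 1 (S.rate J) (S.WupJ J) :=
  ContDiffOn.sum fun k hk => ((S.d_smooth k).mono (S.WupJ_subset_W J)).inv
    fun _ hw => (hw.2 k (Finset.mem_compl.1 hk)).ne'

variable {S J} in
lemma one_le_d_mul_rate {w : F} (hw : w ∈ S.WupJ J) {k : Fin kk} (hk : k ∉ J) :
    1 ≤ S.d k w * S.rate J w := by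
  have hle : (S.d k w)⁻¹ ≤ S.rate J w :=
    Finset.single_le_sum (f := fun k => (S.d k w)⁻¹)
      (fun j hj => inv_nonneg.2 (hw.2 j (Finset.mem_compl.1 hj)).le) (Finset.mem_compl.2 hk)
  exact (inv_le_iff_one_le_mul₀' (hw.2 k hk)).1 hle

/-- `Y` has the properties of the map `Y_J` of the paper: `Y w x` has derivative `x` at `0`, lies
in the kernel of `L`, and vanishes at `0` and, for `w ∈ W^J`, at the delayed times `-d_k(w)`,
`k ∉ J`. -/
structure IsDerivSection (Y : F → (Fin n → ℝ) →L[ℝ] C1 r (Fin n → ℝ)) : Prop where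
  isShear : IsShear (C1.derivCLM 0) S.LofCLM Y
  contDiffOn : ContDiffOn ℝ 1 Y (S.WupJ J)
  evC_zero_eq_zero : ∀ w x, evC (Y w x) 0 = 0
  evC_neg_d : ∀ w ∈ S.WupJ J, ∀ k ∉ J, ∀ x, evC (Y w x) (-(S.d k w)) = 0

lemma exists_isDerivSection [FiniteDimensional ℝ F] (hr : 0 ≤ r) : ∃ Y, S.IsDerivSection J Y := by
  obtain ⟨Y, hYs, hY⟩ := C1.exists_contDiff_dvC_section hr S.L
  refine ⟨Y ∘ S.rate J, ⟨fun w x => (hY _ x).1, fun w x => (hY _ x).2.1⟩,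
    hYs.comp_contDiffOn (S.contDiffOn_rate J), fun w x => (hY _ x).2.2.1, fun w hw k hk x => ?_⟩
  refine (hY _ x).2.2.2 _ (neg_d_mem_Icc0 hw.1 k) ?_
  rw [neg_neg]
  exact one_le_d_mul_rate hw hk

/-- The contribution of `Y w x` to the delayed values, `x ↦ ((Y w x)(-d_k(w)))_k`. -/
def delayed (Y : F → (Fin n → ℝ) →L[ℝ] C1 r (Fin n → ℝ)) (w : F) :
    (Fin n → ℝ) →L[ℝ] (Fin kk → Fin n → ℝ) :=
  .pi fun k => C1.evalCLM (-(S.d k w)) ∘L Y w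

lemma delayed_apply (w : F) (x : Fin n → ℝ) (k : Fin kk) :
    S.delayed Y w x k = evC (Y w x) (-(S.d k w)) := rfl

variable {S J} in
lemma contDiffOn_delayed {T : Set F} (hY : ContDiffOn ℝ 1 Y T) (hT : T ⊆ S.W) :
    ContDiffOn ℝ 1 (S.delayed Y) T :=
  contDiffOn_clm_apply.2 fun _ => contDiffOn_pi.2 fun k =>
    contDiffOn_evC_neg_d (hY.clm_apply contDiffOn_const) contDiffOn_id hT k

/-- The parameter `(v, c)` of the fixed point equation `x = g (v + c x)` which `x = φ'(0)` solves
for `φ ∈ X_f`. It is constant along the lines `φ + Y(Lφ)x`. -/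
def parameter (Y : F → (Fin n → ℝ) →L[ℝ] C1 r (Fin n → ℝ)) (φ : C1 r (Fin n → ℝ)) :
    (Fin kk → Fin n → ℝ) × ((Fin n → ℝ) →L[ℝ] (Fin kk → Fin n → ℝ)) :=
  (S.hat φ - S.delayed Y (S.Lof φ) (dvC φ 0), S.delayed Y (S.Lof φ))

lemma parameter_fst_add (φ : C1 r (Fin n → ℝ)) :
    (S.parameter Y φ).1 + (S.parameter Y φ).2 (dvC φ 0) = S.hat φ :=
  sub_add_cancel _ _

lemma contDiffOn_parameter {T : Set F} (hY : ContDiffOn ℝ 1 Y T) (hT : T ⊆ S.W) :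
    ContDiffOn ℝ 1 (S.parameter Y) (S.LofCLM ⁻¹' T) := by
  have hdelayed : ContDiffOn ℝ 1 (fun φ => S.delayed Y (S.Lof φ)) (S.LofCLM ⁻¹' T) :=
    (contDiffOn_delayed hY hT).comp S.LofCLM.contDiff.contDiffOn (mapsTo_preimage _ _)
  have hderiv : ContDiffOn ℝ 1 (fun φ : C1 r (Fin n → ℝ) => dvC φ 0) (S.LofCLM ⁻¹' T) :=
    (C1.derivCLM 0 : C1 r (Fin n → ℝ) →L[ℝ] _).contDiff.contDiffOn
  exact ((S.contDiffOn_hat.mono (preimage_mono hT)).sub (hdelayed.clm_apply hderiv)).prodMk hdelayed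

lemma isContractiveFixedPoint_parameter_iff {φ : C1 r (Fin n → ℝ)} (hφ : S.Lof φ ∈ S.W) :
    IsContractiveFixedPoint S.V S.g (S.parameter Y φ) (dvC φ 0) ↔
      φ ∈ S.Xf ∧ (S.parameter Y φ, dvC φ 0) ∈ contractionSet S.V S.g := by
  constructor
  · intro h
    have hV : S.hat φ ∈ S.V := by simpa only [parameter_fst_add] using h.mem
    have hg : S.g (S.hat φ) = dvC φ 0 := by simpa only [parameter_fst_add] using h.apply_eq
    exact ⟨⟨⟨hφ, hV⟩, hg.symm⟩, h.mem_contractionSet⟩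
  · rintro ⟨hX, hmem⟩
    exact ⟨hmem, by rw [parameter_fst_add]; exact hX.2.symm⟩

variable {S J} in
lemma IsDerivSection.delayed_eq_zero (hY : S.IsDerivSection J Y) {w : F} (hw : w ∈ S.WJ J) :
    S.delayed Y w = 0 := by
  ext1 x
  funext k
  rw [delayed_apply]
  by_cases hk : k ∈ J
  · rw [hw.2.1 k hk, neg_zero]
    exact hY.evC_zero_eq_zero w x
  · exact hY.evC_neg_d w (S.WJ_subset_WupJ J hw) k hk x

section Shear

variable {S} (hY : IsShear (C1.derivCLM 0) S.LofCLM Y)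
include hY

lemma Lof_add (φ : C1 r (Fin n → ℝ)) (w : F) (x : Fin n → ℝ) : S.Lof (φ + Y w x) = S.Lof φ := by
  have h : S.LofCLM (φ + Y w x) = S.LofCLM φ := by
    rw [map_add, hY.map_apply_eq_zero, add_zero]
  exact h

lemma dvC_add_zero (φ : C1 r (Fin n → ℝ)) (w : F) (x : Fin n → ℝ) :
    dvC (φ + Y w x) 0 = dvC φ 0 + x := by
  have h : C1.derivCLM 0 (φ + Y w x) = C1.derivCLM 0 φ + x := by rw [map_add, hY.map_apply]
  exact h

lemma hat_add (φ : C1 r (Fin n → ℝ)) (x : Fin n → ℝ) :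
    S.hat (φ + Y (S.Lof φ) x) = S.hat φ + S.delayed Y (S.Lof φ) x := by
  funext k
  rw [hat, Lof_add hY]
  exact map_add (C1.evalCLM (-(S.d k (S.Lof φ)))) φ (Y (S.Lof φ) x)

lemma parameter_add (φ : C1 r (Fin n → ℝ)) (x : Fin n → ℝ) :
    S.parameter Y (φ + Y (S.Lof φ) x) = S.parameter Y φ := by
  rw [parameter, parameter, Lof_add hY, hat_add hY, dvC_add_zero hY, map_add,
    add_sub_add_right_eq_sub]

lemma parameter_shearRetraction (φ : C1 r (Fin n → ℝ)) :
    S.parameter Y (shearRetraction (C1.derivCLM 0) S.LofCLM Y φ) = S.parameter Y φ := by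
  have h : shearRetraction (C1.derivCLM 0) S.LofCLM Y φ = φ + Y (S.Lof φ) (-dvC φ 0) := by
    rw [map_neg, ← sub_eq_add_neg]
    rfl
  rw [h, parameter_add hY]

end Shear

/-- The open set of those `φ` with `Lφ ∈ W^J` for which the fixed point equation is in the
contraction regime at `φ'(0)`. -/
def chartRegion (Y : F → (Fin n → ℝ) →L[ℝ] C1 r (Fin n → ℝ)) : Set (C1 r (Fin n → ℝ)) :=
  S.LofCLM ⁻¹' S.WupJ J ∩ (fun φ => (S.parameter Y φ, dvC φ 0)) ⁻¹' contractionSet S.V S.g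

/-- The open set of those `ζ` with `Lζ ∈ W^J` for which the fixed point equation is solvable in
the contraction regime. -/
def chartTarget (Y : F → (Fin n → ℝ) →L[ℝ] C1 r (Fin n → ℝ)) : Set (C1 r (Fin n → ℝ)) :=
  S.LofCLM ⁻¹' S.WupJ J ∩ S.parameter Y ⁻¹' contractiveDomain S.V S.g

/-- The derivative at `0` of the point of `X_f` on the line `ζ + Y(Lζ)x`, in the contraction
regime. -/
def chartHeight (Y : F → (Fin n → ℝ) →L[ℝ] C1 r (Fin n → ℝ)) (ζ : C1 r (Fin n → ℝ)) : Fin n → ℝ :=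
  contractiveFixedPoint S.V S.g (S.parameter Y ζ)

lemma isOpen_preimage_WupJ : IsOpen (S.LofCLM ⁻¹' S.WupJ J) :=
  (S.isOpen_WupJ J).preimage S.LofCLM.continuous

lemma isContractiveFixedPoint_chartHeight {ζ : C1 r (Fin n → ℝ)} (hζ : ζ ∈ S.chartTarget J Y) :
    IsContractiveFixedPoint S.V S.g (S.parameter Y ζ) (S.chartHeight Y ζ) :=
  isContractiveFixedPoint_contractiveFixedPoint hζ.2

lemma Xf_inter_chartRegion (hY : IsShear (C1.derivCLM 0) S.LofCLM Y) :
    S.Xf ∩ S.chartRegion J Y = shearGraph S.LofCLM Y (S.chartHeight Y) ''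
      ((X0sub r n : Set (C1 r (Fin n → ℝ))) ∩ S.chartTarget J Y) := by
  ext φ
  constructor
  · rintro ⟨hX, hL, hmem⟩
    have hfix : IsContractiveFixedPoint S.V S.g (S.parameter Y φ) (dvC φ 0) :=
      (S.isContractiveFixedPoint_parameter_iff hL.1).2 ⟨hX, hmem⟩
    have hheight : S.chartHeight Y (shearRetraction (C1.derivCLM 0) S.LofCLM Y φ) = dvC φ 0 := by
      rw [chartHeight, parameter_shearRetraction hY, hfix.contractiveFixedPoint_eq]
    refine ⟨_, ⟨hY.map_shearRetraction φ, ?_, ?_⟩, hY.shearGraph_shearRetraction hheight⟩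
    · rwa [mem_preimage, hY.map_shearRetraction_eq]
    · rw [mem_preimage, parameter_shearRetraction hY]
      exact ⟨_, hfix⟩
  · rintro ⟨ζ, ⟨hζ, hT⟩, rfl⟩
    have hL : S.Lof (shearGraph S.LofCLM Y (S.chartHeight Y) ζ) ∈ S.WupJ J := by
      rw [← LofCLM_apply, hY.map_shearGraph_eq]
      exact hT.1
    have hderiv : dvC (shearGraph S.LofCLM Y (S.chartHeight Y) ζ) 0 = S.chartHeight Y ζ :=
      hY.map_shearGraph hζ
    have hparam : S.parameter Y (shearGraph S.LofCLM Y (S.chartHeight Y) ζ) = S.parameter Y ζ :=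
      parameter_add hY ζ _
    have hfix := S.isContractiveFixedPoint_chartHeight J hT
    rw [← hparam, ← hderiv, S.isContractiveFixedPoint_parameter_iff hL.1] at hfix
    exact ⟨hfix.1, hL, hfix.2⟩

section Smooth

variable {S J} (hY : ContDiffOn ℝ 1 Y (S.WupJ J))
include hY

lemma isOpen_chartRegion : IsOpen (S.chartRegion J Y) :=
  (((S.contDiffOn_parameter hY (S.WupJ_subset_W J)).continuousOn).prodMk
    (C1.derivCLM 0 : C1 r (Fin n → ℝ) →L[ℝ] _).continuous.continuousOn).isOpen_inter_preimage
    (S.isOpen_preimage_WupJ J) isOpen_contractionSet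

lemma isOpen_chartTarget : IsOpen (S.chartTarget J Y) :=
  (S.contDiffOn_parameter hY (S.WupJ_subset_W J)).continuousOn.isOpen_inter_preimage
    (S.isOpen_preimage_WupJ J) (isOpen_contractiveDomain one_ne_zero S.Vopen S.g_smooth)

lemma contDiffOn_chartHeight : ContDiffOn ℝ 1 (S.chartHeight Y) (S.chartTarget J Y) :=
  (contDiffOn_contractiveFixedPoint one_ne_zero S.Vopen S.g_smooth).comp
    ((S.contDiffOn_parameter hY (S.WupJ_subset_W J)).mono inter_subset_left) fun _ hζ => hζ.2

end Smooth

variable {S J}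

lemma IsDerivSection.XfJ_subset_chartRegion (hY : S.IsDerivSection J Y) :
    S.XfJ J ⊆ S.chartRegion J Y := by
  rintro φ ⟨-, hU, hW⟩
  refine ⟨S.WJ_subset_WupJ J hW, ?_⟩
  have hparam : S.parameter Y φ = (S.hat φ, 0) := by
    simp only [parameter, hY.delayed_eq_zero hW, zero_apply, sub_zero]
  rw [mem_preimage, hparam]
  exact mem_contractionSet_of_clm_eq_zero (S.Vopen.mem_nhds hU.2)
    (S.g_smooth.contDiffAt (S.Vopen.mem_nhds hU.2)) _

variable (J) in
lemma exists_chart_XfJ [FiniteDimensional ℝ F] (hr : 0 ≤ r) :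
    ∃ N : Set (C1 r (Fin n → ℝ)),
      (∃ O, IsOpen O ∧ N = S.Xf ∩ O) ∧ S.XfJ J ⊆ N ∧
      IsAlmostGraphOver N (X0sub r n : Set (C1 r (Fin n → ℝ))) ∧
      ∃ R : C1 r (Fin n → ℝ) → C1 r (Fin n → ℝ),
        IsC1DiffeoOn R N (R '' N) ∧
        ∃ O', IsOpen O' ∧ R '' N = (X0sub r n : Set (C1 r (Fin n → ℝ))) ∩ O' := by
  obtain ⟨Y, hY⟩ := S.exists_isDerivSection J hr
  have hX0 : ∀ ζ ∈ (X0sub r n : Set (C1 r (Fin n → ℝ))) ∩ S.chartTarget J Y,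
      C1.derivCLM 0 ζ = 0 := fun ζ hζ => hζ.1
  have hWupJ : (X0sub r n : Set (C1 r (Fin n → ℝ))) ∩ S.chartTarget J Y ⊆
      S.LofCLM ⁻¹' S.WupJ J := fun ζ hζ => hζ.2.1
  have hheight := (contDiffOn_chartHeight hY.contDiffOn).mono
    (inter_subset_right (s := (X0sub r n : Set (C1 r (Fin n → ℝ)))))
  have hR := hY.isShear.isC1DiffeoOn_shearRetraction hY.contDiffOn hX0 hWupJ hheight
  have hA := hY.isShear.isAlmostGraphOver_image_shearGraph hY.contDiffOn hX0 hWupJ hheight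
  rw [← S.Xf_inter_chartRegion J hY.isShear] at hR hA
  refine ⟨_, ⟨_, isOpen_chartRegion hY.contDiffOn, rfl⟩,
    subset_inter inter_subset_left hY.XfJ_subset_chartRegion, hA, _, ?_,
    _, isOpen_chartTarget hY.contDiffOn, hR.2.2.1⟩
  rwa [hR.2.2.1]

lemma XfJ_nonempty [FiniteDimensional ℝ F] (hr : 0 ≤ r) (hJ : (S.UJ J).Nonempty) :
    (S.XfJ J).Nonempty := by
  obtain ⟨Y, hY⟩ := S.exists_isDerivSection J hr
  obtain ⟨φ, hφ, hW⟩ := hJ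
  have hL := Lof_add hY.isShear φ (S.Lof φ) (S.fmap φ - dvC φ 0)
  have hhat := hat_add hY.isShear φ (S.fmap φ - dvC φ 0)
  have hderiv := dvC_add_zero hY.isShear φ (S.Lof φ) (S.fmap φ - dvC φ 0)
  rw [hY.delayed_eq_zero hW, zero_apply, add_zero] at hhat
  rw [add_sub_cancel] at hderiv
  have hU : φ + Y (S.Lof φ) (S.fmap φ - dvC φ 0) ∈ S.U := by
    rw [U, mem_ofPred_eq, hL, hhat]
    exact hφ
  refine ⟨_, ⟨hU, ?_⟩, hU, ?_⟩
  · exact hderiv.trans (congrArg S.g hhat).symm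
  · rwa [hL]

lemma eq_of_mem_WJ {J' : Finset (Fin kk)} {w : F} (hw : w ∈ S.WJ J) (hw' : w ∈ S.WJ J') :
    J = J' := by
  have h : ∀ {I : Finset (Fin kk)}, w ∈ S.WJ I → ∀ k, k ∈ I ↔ S.d k w = 0 := fun hI k =>
    ⟨hI.2.1 k, fun hk => by_contra fun hkI => (hI.2.2 k hkI).ne' hk⟩
  ext k
  rw [h hw, h hw']

lemma disjoint_XfJ {J' : Finset (Fin kk)} (h : J ≠ J') : Disjoint (S.XfJ J) (S.XfJ J') :=
  disjoint_left.2 fun _ hφ hφ' => h (eq_of_mem_WJ hφ.2.2 hφ'.2.2)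

lemma exists_mem_WJ {w : F} (hw : w ∈ S.W) : ∃ J, w ∈ S.WJ J := by
  classical
  refine ⟨Finset.univ.filter fun k => S.d k w = 0, hw,
    fun j hj => (Finset.mem_filter_univ j).1 hj, fun k hk => ?_⟩
  exact (S.d_mem k w hw).1.lt_of_ne' fun h => hk ((Finset.mem_filter_univ k).2 h)

variable (S) in
lemma Xf_eq_iUnion_XfJ :
    S.Xf = ⋃ J ∈ {J : Finset (Fin kk) | (S.UJ J).Nonempty}, S.XfJ J := by
  refine subset_antisymm (fun φ hφ => ?_) (iUnion₂_subset fun J _ => inter_subset_left)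
  obtain ⟨J, hJ⟩ := exists_mem_WJ hφ.1.1
  exact mem_biUnion (x := J) ⟨φ, hφ.1, hJ⟩ ⟨hφ, hφ.1, hJ⟩

end Setting

end SolutionManifold

theorem statement19_general (hr : 0 < r) (S : Setting r n kk F) :
    (S.Xf = ⋃ J ∈ {J : Finset (Fin kk) | (S.UJ J).Nonempty}, S.XfJ J) ∧
    (∀ J : Finset (Fin kk), (S.UJ J).Nonempty → (S.XfJ J).Nonempty) ∧
    ({J : Finset (Fin kk) | (S.UJ J).Nonempty}.Pairwise
      fun J J' => Disjoint (S.XfJ J) (S.XfJ J')) ∧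
    (∀ J : Finset (Fin kk), (S.UJ J).Nonempty →
      ∃ N : Set (C1 r (Fin n → ℝ)),
        (∃ O, IsOpen O ∧ N = S.Xf ∩ O) ∧ S.XfJ J ⊆ N ∧
        IsAlmostGraphOver N (X0sub r n : Set (C1 r (Fin n → ℝ))) ∧
        ∃ R : C1 r (Fin n → ℝ) → C1 r (Fin n → ℝ),
          IsC1DiffeoOn R N (R '' N) ∧
          ∃ O', IsOpen O' ∧ R '' N = (X0sub r n : Set (C1 r (Fin n → ℝ))) ∩ O') ∧
    {J : Finset (Fin kk) | (S.UJ J).Nonempty}.ncard ≤ 2 ^ kk :=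
  ⟨S.Xf_eq_iUnion_XfJ, fun _ => Setting.XfJ_nonempty hr.le, fun _ _ _ _ => Setting.disjoint_XfJ,
    fun J _ => Setting.exists_chart_XfJ J hr.le, (Set.ncard_le_card _).trans (by simp)⟩

/-- The main result: the solution manifold decomposes into the mutually disjoint nonempty
sets `X_{fJ}` and has a finite atlas of at most `2^kk` manifold charts whose domains are
almost graphs over `X₀`. -/
theorem statement19 (hr : 0 < r) (hk : 0 < kk) (S : Setting r n kk F)
    (hV : S.U.Nonempty) (hyp : S.HypB ∨ S.HypD1B hk) :
    (S.Xf = ⋃ J ∈ {J : Finset (Fin kk) | (S.UJ J).Nonempty}, S.XfJ J) ∧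
    (∀ J : Finset (Fin kk), (S.UJ J).Nonempty → (S.XfJ J).Nonempty) ∧
    ({J : Finset (Fin kk) | (S.UJ J).Nonempty}.Pairwise
      fun J J' => Disjoint (S.XfJ J) (S.XfJ J')) ∧
    (∀ J : Finset (Fin kk), (S.UJ J).Nonempty →
      ∃ N : Set (C1 r (Fin n → ℝ)),
        (∃ O, IsOpen O ∧ N = S.Xf ∩ O) ∧ S.XfJ J ⊆ N ∧
        IsAlmostGraphOver N (X0sub r n : Set (C1 r (Fin n → ℝ))) ∧
        ∃ R : C1 r (Fin n → ℝ) → C1 r (Fin n → ℝ),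
          IsC1DiffeoOn R N (R '' N) ∧
          ∃ O', IsOpen O' ∧ R '' N = (X0sub r n : Set (C1 r (Fin n → ℝ))) ∩ O') ∧
    {J : Finset (Fin kk) | (S.UJ J).Nonempty}.ncard ≤ 2 ^ kk :=
  statement19_general hr S
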